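/- The family of q vectors {α_1,…,α_{q−2}, β_1, β_2} is an orthonormal basis of ℝ^q; equivalently, the q×q matrix Λ^(q) whose columns are α_1,…,α_{q−2}, β_1, β_2 (in this order) satisfies (Λ^(q))ᵀ·Λ^(q) = I, i.e. Λ^(q) is orthogonal. -/

import Mathlib

open Real Finset Matrix

noncomputable section

/-- `λ_j = ((μ−1) + (−1)^{j+1}·√(μ²−(4/q−2)μ+1))/2` for `j ∈ {1,2}`. -/
def lamJ (q : ℕ) (μ : ℝ) (j : ℕ) : ℝ :=
  ((μ - 1) + (-1 : ℝ) ^ (j + 1) * Real.sqrt (μ ^ 2 - (4 / (q : ℝ) - 2) * μ + 1)) / 2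

/-- `m_j = λ_j + 1`. -/
def mJ (q : ℕ) (μ : ℝ) (j : ℕ) : ℝ := lamJ q μ j + 1

/-- `x_j = 1 − q·m_j`. -/
def xJ (q : ℕ) (μ : ℝ) (j : ℕ) : ℝ := 1 - (q : ℝ) * mJ q μ j

/-- `α_i ∈ ℝ^q` (1-based `i` and 1-based coordinate index as in the paper). -/
def alphaVec (q i : ℕ) : Fin q → ℝ :=
  fun k => (Real.sqrt ((i : ℝ) * ((i : ℝ) + 1)))⁻¹ *
    (if (k : ℕ) + 1 < i + 1 then 1
     else if (k : ℕ) + 1 = i + 1 then -(i : ℝ)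
     else 0)

/-- `β_j ∈ ℝ^q`, with `β_{j,k} = (q−1+x_j²)^{−1/2}·(1 if k ≠ q; x_j if k = q)`. -/
def betaVec (q : ℕ) (μ : ℝ) (j : ℕ) : Fin q → ℝ :=
  fun k => (Real.sqrt ((q : ℝ) - 1 + xJ q μ j ^ 2))⁻¹ *
    (if (k : ℕ) + 1 = q then xJ q μ j else 1)

/-- The matrix `Λ^(q)` whose columns are `α_1, …, α_{q−2}, β_1, β_2` in this order. -/
def LambdaMat (q : ℕ) (μ : ℝ) : Matrix (Fin q) (Fin q) ℝ :=
  Matrix.of fun k c =>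
    if (c : ℕ) < q - 2 then alphaVec q ((c : ℕ) + 1) k
    else if (c : ℕ) = q - 2 then betaVec q μ 1 k
    else betaVec q μ 2 k

/-!
The `α_i` are Helmert vectors: `α_i` is proportional to `(1, …, 1, -i, 0, …, 0)` with `i` ones, so
it is orthogonal to every vector whose first `i + 1` coordinates agree. All later columns of
`Λ^(q)` have this property. What remains is `β_1 ⬝ᵥ β_2 = 0`, i.e. `x_1 x_2 = 1 - q`: the numbers
`m_1, m_2` are the roots of `X² - (μ + 1) X + μ / q`, whose discriminant is nonnegative because it
is the convex combination of `(μ - 1)²` and `(μ + 1)²` with weights `1 / q` and `1 - 1 / q`.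
-/

section DotProduct

variable {m n R : Type*} [Fintype m]

theorem transpose_mul_self_eq_one_of_col_dotProduct [LinearOrder n] [CommSemiring R]
    {A : Matrix m n R} (hself : ∀ c, A.col c ⬝ᵥ A.col c = 1)
    (hlt : ∀ a b, a < b → A.col a ⬝ᵥ A.col b = 0) : Aᵀ * A = 1 := by
  ext a b
  change A.col a ⬝ᵥ A.col b = _
  rcases lt_trichotomy a b with hab | rfl | hba
  · rw [hlt a b hab, one_apply_ne hab.ne]
  · rw [hself, one_apply_eq]
  · rw [dotProduct_comm, hlt b a hba, one_apply_ne hba.ne']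

theorem inv_sqrt_smul_dotProduct_self {v : m → ℝ} {r : ℝ} (hr : 0 < r) (hv : v ⬝ᵥ v = r) :
    ((√r)⁻¹ • v) ⬝ᵥ ((√r)⁻¹ • v) = 1 := by
  rw [smul_dotProduct, dotProduct_smul, hv, smul_smul, smul_eq_mul, ← mul_inv,
    Real.mul_self_sqrt hr.le, inv_mul_cancel₀ hr.ne']

theorem update_one_dotProduct_update_one [DecidableEq m] [Ring R] (l : m) (x y : R) :
    Function.update (1 : m → R) l x ⬝ᵥ Function.update 1 l y = Fintype.card m - 1 + x * y := by
  have hcard : 1 ≤ Fintype.card m := Fintype.card_pos_iff.mpr ⟨l⟩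
  have hne : ∀ k ∈ univ.erase l,
      Function.update (1 : m → R) l x k * Function.update (1 : m → R) l y k = 1 := by
    intro k hk
    simp [Function.update_of_ne (ne_of_mem_erase hk)]
  rw [dotProduct, ← sum_erase_add _ _ (mem_univ l), sum_congr rfl hne]
  simp [Nat.cast_sub hcard]

end DotProduct

section Helmert

variable (R : Type*) [CommRing R] {n : ℕ}

/-- The unnormalized Helmert contrast `(1, …, 1, -i, 0, …, 0)`, with `-i` at the (0-based)
position `i`; `α_i` is its normalization. -/
def helmertVec (i : Fin n) : Fin n → R :=
  fun k => if k < i then 1 else if k = i then -((i : ℕ) : R) else 0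

variable {R}

theorem helmertVec_dotProduct (i : Fin n) (w : Fin n → R) :
    helmertVec R i ⬝ᵥ w = ∑ k ∈ Iio i, w k - (i : ℕ) * w i := by
  have hterm (k : Fin n) : helmertVec R i k * w k =
      (if k < i then w k else 0) - if k = i then (i : ℕ) * w k else 0 := by
    rcases lt_trichotomy k i with hk | rfl | hk
    · simp [helmertVec, hk, hk.ne]
    · simp [helmertVec]
    · simp [helmertVec, hk.not_gt, hk.ne']
  simp only [dotProduct, hterm, sum_sub_distrib, sum_ite_eq', mem_univ, if_true,
    ← sum_filter, filter_gt_eq_Iio]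

theorem helmertVec_dotProduct_eq_zero {i : Fin n} {w : Fin n → R} {c : R}
    (hw : ∀ k ≤ i, w k = c) : helmertVec R i ⬝ᵥ w = 0 := by
  rw [helmertVec_dotProduct, hw i le_rfl, sum_congr rfl fun k hk => hw k (mem_Iio.mp hk).le]
  simp

theorem helmertVec_dotProduct_self (i : Fin n) :
    helmertVec R i ⬝ᵥ helmertVec R i = (i : ℕ) * ((i : ℕ) + 1) := by
  have hones : ∀ k ∈ Iio i, helmertVec R i k = 1 := fun k hk => if_pos (mem_Iio.mp hk)
  have hdiag : helmertVec R i i = -((i : ℕ) : R) := by simp [helmertVec]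
  rw [helmertVec_dotProduct, sum_congr rfl hones, hdiag, sum_const, Fin.card_Iio, nsmul_one]
  ring

end Helmert

section Alpha

variable {q i : ℕ}

theorem alphaVec_eq_smul_helmertVec (i : Fin q) :
    alphaVec q i = (√((i : ℕ) * ((i : ℕ) + 1)))⁻¹ • helmertVec ℝ i := by
  ext k
  simp [alphaVec, helmertVec, Fin.ext_iff]

theorem alphaVec_dotProduct_self (hi : 0 < i) (hiq : i < q) :
    alphaVec q i ⬝ᵥ alphaVec q i = 1 := by
  lift i to Fin q using hiq
  rw [alphaVec_eq_smul_helmertVec]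
  exact inv_sqrt_smul_dotProduct_self (by positivity) (helmertVec_dotProduct_self i)

theorem alphaVec_dotProduct_eq_zero {w : Fin q → ℝ} {c : ℝ} (hiq : i < q)
    (hw : ∀ k : Fin q, (k : ℕ) ≤ i → w k = c) : alphaVec q i ⬝ᵥ w = 0 := by
  lift i to Fin q using hiq
  rw [alphaVec_eq_smul_helmertVec, smul_dotProduct, helmertVec_dotProduct_eq_zero hw, smul_zero]

theorem alphaVec_dotProduct_alphaVec_of_lt {j : ℕ} (hiq : i < q) (hij : i < j) :
    alphaVec q i ⬝ᵥ alphaVec q j = 0 := by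
  refine alphaVec_dotProduct_eq_zero (c := (√(j * (j + 1)))⁻¹) hiq fun k hk => ?_
  rw [alphaVec, if_pos (by omega), mul_one]

theorem alphaVec_dotProduct_betaVec (hiq : i + 1 < q) (μ : ℝ) (j : ℕ) :
    alphaVec q i ⬝ᵥ betaVec q μ j = 0 := by
  refine alphaVec_dotProduct_eq_zero (c := (√(q - 1 + xJ q μ j ^ 2))⁻¹) (by omega) fun k hk => ?_
  rw [betaVec, if_neg (by omega), mul_one]

end Alpha

section Beta

variable {q : ℕ} (μ : ℝ)

theorem lamJ_discriminant_nonneg : 0 ≤ μ ^ 2 - (4 / (q : ℝ) - 2) * μ + 1 := by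
  have hq_inv : (q : ℝ)⁻¹ ≤ 1 := Nat.cast_inv_le_one q
  calc
    0 ≤ (q : ℝ)⁻¹ * (μ - 1) ^ 2 + (1 - (q : ℝ)⁻¹) * (μ + 1) ^ 2 :=
      add_nonneg (by positivity) (mul_nonneg (sub_nonneg.mpr hq_inv) (sq_nonneg _))
    _ = μ ^ 2 - (4 / (q : ℝ) - 2) * μ + 1 := by ring

theorem mJ_one_add_mJ_two : mJ q μ 1 + mJ q μ 2 = μ + 1 := by
  simp only [mJ, lamJ]
  ring

theorem mJ_one_mul_mJ_two : mJ q μ 1 * mJ q μ 2 = μ / q := by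
  simp only [mJ, lamJ]
  linear_combination -(1 / 4) * Real.sq_sqrt (lamJ_discriminant_nonneg μ)

theorem xJ_one_mul_xJ_two : xJ q μ 1 * xJ q μ 2 = 1 - q :=
  calc
    xJ q μ 1 * xJ q μ 2
      = 1 - q * (mJ q μ 1 + mJ q μ 2) + q ^ 2 * (mJ q μ 1 * mJ q μ 2) := by
        simp only [xJ]
        ring
    _ = 1 - q * (μ + 1) + q ^ 2 * (μ / q) := by
        rw [mJ_one_add_mJ_two, mJ_one_mul_mJ_two]
    _ = 1 - q := by
        field_simp
        ring

theorem betaVec_eq_smul_update_one (hq : 0 < q) (j : ℕ) :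
    betaVec q μ j = (√(q - 1 + xJ q μ j ^ 2))⁻¹ •
      Function.update (1 : Fin q → ℝ) ⟨q - 1, Nat.sub_one_lt_of_lt hq⟩ (xJ q μ j) := by
  ext k
  have hlast : (k : ℕ) + 1 = q ↔ (k : ℕ) = q - 1 := by omega
  simp [betaVec, Function.update_apply, Fin.ext_iff, hlast]

theorem betaVec_dotProduct_self (hq : 1 < q) (j : ℕ) :
    betaVec q μ j ⬝ᵥ betaVec q μ j = 1 := by
  have hq_sub : (0 : ℝ) < q - 1 := sub_pos.mpr (Nat.one_lt_cast.mpr hq)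
  rw [betaVec_eq_smul_update_one μ (by omega)]
  apply inv_sqrt_smul_dotProduct_self (by positivity)
  rw [update_one_dotProduct_update_one, Fintype.card_fin, sq]

theorem betaVec_one_dotProduct_betaVec_two (hq : 0 < q) :
    betaVec q μ 1 ⬝ᵥ betaVec q μ 2 = 0 := by
  rw [betaVec_eq_smul_update_one μ hq, betaVec_eq_smul_update_one μ hq, smul_dotProduct,
    dotProduct_smul, update_one_dotProduct_update_one, Fintype.card_fin, xJ_one_mul_xJ_two]
  simp

end Beta

section Columns

variable {q : ℕ} {c : Fin q} (μ : ℝ)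

theorem LambdaMat_col_of_lt (hc : (c : ℕ) < q - 2) :
    (LambdaMat q μ).col c = alphaVec q (c + 1) := by
  ext k
  simp [LambdaMat, hc]

theorem LambdaMat_col_of_eq (hc : (c : ℕ) = q - 2) : (LambdaMat q μ).col c = betaVec q μ 1 := by
  ext k
  simp [LambdaMat, hc]

theorem LambdaMat_col_of_gt (hc : q - 2 < (c : ℕ)) : (LambdaMat q μ).col c = betaVec q μ 2 := by
  ext k
  simp [LambdaMat, hc.not_gt, hc.ne']

theorem LambdaMat_col_dotProduct_self (hq : 2 ≤ q) (c : Fin q) :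
    (LambdaMat q μ).col c ⬝ᵥ (LambdaMat q μ).col c = 1 := by
  rcases lt_trichotomy (c : ℕ) (q - 2) with hc | hc | hc
  · rw [LambdaMat_col_of_lt μ hc]
    exact alphaVec_dotProduct_self (by omega) (by omega)
  · rw [LambdaMat_col_of_eq μ hc]
    exact betaVec_dotProduct_self μ hq 1
  · rw [LambdaMat_col_of_gt μ hc]
    exact betaVec_dotProduct_self μ hq 2

theorem LambdaMat_col_dotProduct_col_of_lt {a b : Fin q} (hab : a < b) :
    (LambdaMat q μ).col a ⬝ᵥ (LambdaMat q μ).col b = 0 := by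
  rw [Fin.lt_def] at hab
  rcases lt_or_ge (a : ℕ) (q - 2) with ha | ha
  · rw [LambdaMat_col_of_lt μ ha]
    rcases lt_trichotomy (b : ℕ) (q - 2) with hb | hb | hb
    · rw [LambdaMat_col_of_lt μ hb]
      exact alphaVec_dotProduct_alphaVec_of_lt (by omega) (by omega)
    · rw [LambdaMat_col_of_eq μ hb]
      exact alphaVec_dotProduct_betaVec (by omega) μ 1
    · rw [LambdaMat_col_of_gt μ hb]
      exact alphaVec_dotProduct_betaVec (by omega) μ 2
  · rw [LambdaMat_col_of_eq μ (by omega), LambdaMat_col_of_gt μ (by omega)]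
    exact betaVec_one_dotProduct_betaVec_two μ (by omega)

end Columns

theorem Lambda_orthogonal_general (q : ℕ) (hq : 2 ≤ q) (μ : ℝ) :
    (LambdaMat q μ)ᵀ * LambdaMat q μ = 1 :=
  transpose_mul_self_eq_one_of_col_dotProduct (LambdaMat_col_dotProduct_self μ hq)
    fun _ _ hab => LambdaMat_col_dotProduct_col_of_lt μ hab

/-- part of Theorem 2 of the paper.
The family `{α_1, …, α_{q−2}, β_1, β_2}` is an orthonormal basis of `ℝ^q`;
equivalently the matrix `Λ^(q)` with these columns satisfies `(Λ^(q))ᵀ·Λ^(q) = 1`,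
i.e. `Λ^(q)` is orthogonal. -/
theorem Lambda_orthogonal
    (q : ℕ) (hq : 2 ≤ q) (μ : ℝ) (hμ : 0 < μ) :
    (LambdaMat q μ)ᵀ * LambdaMat q μ = 1 := by
  exact Lambda_orthogonal_general q hq μ

end
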